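/- Let 0 < α < 2, β > 0, and πα/2 < μ < min(π, πα). Then there exists a constant C = C(α, β, μ) > 0 such that for all complex z with μ ≤ arg(z) ≤ π, the two-parameter Mittag-Leffler function satisfies |E_{α,β}(z)| ≤ C/(1 + |z|). -/

import Mathlib

open Real Complex

/-- The two-parameter Mittag-Leffler function `E_{α,β}(z) = ∑ zⁿ/Γ(αn+β)`. -/
noncomputable def mittagLeffler (α β : ℝ) (z : ℂ) : ℂ :=
  ∑' n : ℕ, z ^ n / Complex.Gamma ((α : ℂ) * n + β)

/-!
Inverting the Laplace transform `∫₀^∞ t^(a-1) e^(-st) dt = Γ(a) s^(-a)` on the line `Re s = 1` gives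
`1/Γ(a) = (2πi)⁻¹ ∫ eˢ s^(-a) ds` for `Re a > 1`. For `|z| < 1`, summing a geometric series under
the integral yields

  `E_{α,β}(z) = (2πi)⁻¹ ∫ eˢ s^(α-β) / (s^α - z) ds`.

On the line `|arg s| < π/2`, so `s^α` stays at an angle at least `μ - πα/2 > 0` from every `z` with
`μ ≤ |arg z|`. Hence `|s^α - z| ≥ c (1 + |z|)`; for `β > α + 1` this extends the representation
analytically to the whole sector and bounds the integral by `C / (1 + |z|)`. The other values of
`β` are reached downwards through `E_{α,β} = β E_{α,β+1} + α z E'_{α,β+1}`, at the cost of shrinking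
the sector: in the variable `w = log z` the operator `z d/dz` is `d/dw`, and Cauchy's estimate on
discs of fixed radius preserves the bound.
-/

open Asymptotics Filter FourierTransform MeasureTheory Set Topology

section ParametricIntegral

theorem aestronglyMeasurable_deriv_of_eventually {𝕜 X E : Type*} [NontriviallyNormedField 𝕜]
    [NormedAddCommGroup E] [NormedSpace 𝕜 E] [MeasurableSpace X] {ν : Measure X}
    {F : 𝕜 → X → E} {w : 𝕜} (hF : ∀ᶠ v in 𝓝 w, AEStronglyMeasurable (F v) ν)
    (hF' : ∀ᵐ x ∂ν, DifferentiableAt 𝕜 (F · x) w) :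
    AEStronglyMeasurable (fun x ↦ deriv (F · x) w) ν := by
  obtain ⟨v, hv, hFv⟩ :=
    exists_seq_forall_of_frequently (hF.filter_mono (nhdsWithin_le_nhds (s := {w}ᶜ))).frequently
  refine aestronglyMeasurable_of_tendsto_ae atTop (f := fun n x ↦ slope (F · x) w (v n))
    (fun n ↦ ((hFv n).sub hF.self_of_nhds).const_smul _) ?_
  filter_upwards [hF'] with x hx
  exact hx.hasDerivAt.tendsto_slope.comp hv

theorem differentiableOn_integral_of_dominated {X E : Type*} [NormedAddCommGroup E]
    [NormedSpace ℂ E] [MeasurableSpace X] {ν : Measure X} {F : ℂ → X → E} {U : Set ℂ}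
    {bound : X → ℝ} (hU : IsOpen U) (hF_meas : ∀ w ∈ U, AEStronglyMeasurable (F w) ν)
    (hF_diff : ∀ᵐ x ∂ν, DifferentiableOn ℂ (F · x) U)
    (hF_bound : ∀ᵐ x ∂ν, ∀ w ∈ U, ‖F w x‖ ≤ bound x) (hbound : Integrable bound ν) :
    DifferentiableOn ℂ (fun w ↦ ∫ x, F w x ∂ν) U := by
  intro w hw
  obtain ⟨R, hR, hRU⟩ := Metric.isOpen_iff.1 hU w hw
  have closedBall_subset : ∀ v ∈ Metric.ball w (R / 2), Metric.closedBall v (R / 2) ⊆ U := by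
    intro v hv u hu
    refine hRU ?_
    rw [Metric.mem_ball] at hv ⊢
    rw [Metric.mem_closedBall] at hu
    linarith [dist_triangle u v w]
  have ball_subset : Metric.ball w (R / 2) ⊆ U := fun v hv ↦
    closedBall_subset v hv (Metric.mem_closedBall_self (by positivity))
  have hmeas : ∀ᶠ v in 𝓝 w, AEStronglyMeasurable (F v) ν :=
    eventually_of_mem (hU.mem_nhds hw) hF_meas
  have hint : Integrable (F w) ν :=
    hbound.mono' (hF_meas w hw) (hF_bound.mono fun x hx ↦ hx w hw)
  have hderiv_bound : ∀ᵐ x ∂ν, ∀ v ∈ Metric.ball w (R / 2),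
      ‖deriv (F · x) v‖ ≤ bound x / (R / 2) := by
    filter_upwards [hF_diff, hF_bound] with x hdiff hle v hv
    refine Complex.norm_deriv_le_of_forall_mem_sphere_norm_le (by positivity)
      (hdiff.diffContOnCl_ball (closedBall_subset v hv)) fun u hu ↦ ?_
    exact hle u (closedBall_subset v hv (Metric.sphere_subset_closedBall hu))
  refine (hasDerivAt_integral_of_dominated_loc_of_deriv_le (Metric.ball_mem_nhds w (by positivity))
    hmeas hint (aestronglyMeasurable_deriv_of_eventually hmeas ?_) hderiv_bound
    (hbound.div_const _) ?_).2.differentiableAt.differentiableWithinAt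
  · filter_upwards [hF_diff] with x hdiff using hdiff.differentiableAt (hU.mem_nhds hw)
  · filter_upwards [hF_diff] with x hdiff v hv using
      (hdiff.differentiableAt (hU.mem_nhds (ball_subset hv))).hasDerivAt

end ParametricIntegral

section Laplace

theorem eqOn_re_pos_of_eq_ofReal {E : Type*} [NormedAddCommGroup E] [NormedSpace ℂ E]
    [CompleteSpace E] {f g : ℂ → E} (hf : DifferentiableOn ℂ f {w | 0 < w.re})
    (hg : DifferentiableOn ℂ g {w | 0 < w.re}) (hfg : ∀ x : ℝ, 0 < x → f x = g x) :
    EqOn f g {w | 0 < w.re} := by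
  have hU : IsOpen {w : ℂ | 0 < w.re} := isOpen_lt continuous_const continuous_re
  have hofReal : Tendsto ((↑) : ℝ → ℂ) (𝓝[≠] 1) (𝓝[≠] 1) :=
    continuous_ofReal.continuousWithinAt.tendsto_nhdsWithin fun x hx ↦ by simpa using hx
  have heq : ∀ᶠ x : ℝ in 𝓝[≠] 1, f x = g x :=
    nhdsWithin_le_nhds ((lt_mem_nhds one_pos).mono hfg)
  exact (hf.analyticOnNhd hU).eqOn_of_preconnected_of_frequently_eq (hg.analyticOnNhd hU)
    (convex_halfSpace_re_gt 0).isPreconnected (z₀ := 1) (by simp)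
    (hofReal.frequently heq.frequently)

theorem norm_ofReal_cpow_mul_cexp_neg_mul (a r : ℂ) {t : ℝ} (ht : 0 < t) :
    ‖(t : ℂ) ^ (a - 1) * cexp (-(r * t))‖ = t ^ (a.re - 1) * rexp (-(r.re * t)) := by
  simp [norm_cpow_eq_rpow_re_of_pos ht, Complex.norm_exp]

theorem integrableOn_rpow_mul_exp_neg_mul_Ioi {a r : ℝ} (ha : 0 < a) (hr : 0 < r) :
    IntegrableOn (fun t ↦ t ^ (a - 1) * rexp (-(r * t))) (Ioi 0) := by
  simpa using integrableOn_rpow_mul_exp_neg_mul_rpow (p := 1) (by linarith : -1 < a - 1) one_pos hr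

theorem measurable_ofReal_cpow_mul_cexp_neg_mul (a r : ℂ) :
    Measurable fun t : ℝ ↦ (t : ℂ) ^ (a - 1) * cexp (-(r * t)) := by
  fun_prop

theorem integrableOn_cpow_mul_cexp_neg_mul_Ioi {a r : ℂ} (ha : 0 < a.re) (hr : 0 < r.re) :
    IntegrableOn (fun t : ℝ ↦ (t : ℂ) ^ (a - 1) * cexp (-(r * t))) (Ioi 0) := by
  refine (integrableOn_rpow_mul_exp_neg_mul_Ioi ha hr).mono'
    (measurable_ofReal_cpow_mul_cexp_neg_mul a r).aestronglyMeasurable ?_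
  filter_upwards [ae_restrict_mem measurableSet_Ioi] with t ht
  exact (norm_ofReal_cpow_mul_cexp_neg_mul a r ht).le

theorem differentiableOn_integral_cpow_mul_cexp_neg_mul_Ioi {a : ℂ} (ha : 0 < a.re) :
    DifferentiableOn ℂ (fun r ↦ ∫ t : ℝ in Ioi 0, (t : ℂ) ^ (a - 1) * cexp (-(r * t)))
      {r | 0 < r.re} := by
  intro r (hr : 0 < r.re)
  have hU : IsOpen {v : ℂ | r.re / 2 < v.re} := isOpen_lt continuous_const continuous_re
  refine ((differentiableOn_integral_of_dominated hU (fun v _ ↦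
    (measurable_ofReal_cpow_mul_cexp_neg_mul a v).aestronglyMeasurable)
    (ae_of_all _ fun t ↦ by fun_prop) ?_
    (integrableOn_rpow_mul_exp_neg_mul_Ioi ha (half_pos hr))).differentiableAt
    (hU.mem_nhds (half_lt_self hr))).differentiableWithinAt
  filter_upwards [ae_restrict_mem measurableSet_Ioi] with t (ht : 0 < t) v (hv : r.re / 2 < v.re)
  rw [norm_ofReal_cpow_mul_cexp_neg_mul a v ht]
  gcongr

theorem integral_cpow_mul_cexp_neg_mul_Ioi {a r : ℂ} (ha : 0 < a.re) (hr : 0 < r.re) :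
    ∫ t : ℝ in Ioi 0, (t : ℂ) ^ (a - 1) * cexp (-(r * t)) = r ^ (-a) * Complex.Gamma a := by
  refine eqOn_re_pos_of_eq_ofReal (differentiableOn_integral_cpow_mul_cexp_neg_mul_Ioi ha)
    (g := fun r ↦ r ^ (-a) * Complex.Gamma a) (fun w hw ↦ ?_) (fun x hx ↦ ?_) hr
  · exact ((differentiableAt_id.cpow_const (Or.inl hw)).mul_const _).differentiableWithinAt
  · have harg : (x : ℂ).arg ≠ π := by rw [arg_ofReal_of_nonneg hx.le]; exact Real.pi_pos.ne
    rw [Complex.integral_cpow_mul_exp_neg_mul_Ioi ha hx, one_div, inv_cpow _ _ harg, cpow_neg]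

end Laplace

section Bromwich

/-- The parametrization `s = 1 + 2πix` of the vertical line `Re s = 1`. Since `ds = 2πi dx`,
Bromwich integrals `(2πi)⁻¹ ∫ f(s) ds` become `∫ f(bromwichLine x) dx`, and Laplace transforms
along the line become Fourier transforms in Mathlib's normalization. -/
noncomputable def bromwichLine (x : ℝ) : ℂ := 1 + 2 * π * x * I

@[simp]
theorem bromwichLine_re (x : ℝ) : (bromwichLine x).re = 1 := by simp [bromwichLine]

theorem continuous_bromwichLine : Continuous bromwichLine := by
  unfold bromwichLine
  fun_prop

theorem bromwichLine_mem_slitPlane (x : ℝ) : bromwichLine x ∈ slitPlane := Or.inl (by simp)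

theorem bromwichLine_ne_zero (x : ℝ) : bromwichLine x ≠ 0 :=
  slitPlane_ne_zero (bromwichLine_mem_slitPlane x)

theorem one_le_norm_bromwichLine (x : ℝ) : 1 ≤ ‖bromwichLine x‖ := by
  simpa using re_le_norm (bromwichLine x)

theorem norm_bromwichLine (x : ℝ) : ‖bromwichLine x‖ = √(1 + ‖x * (2 * π)‖ ^ 2) := by
  rw [Complex.norm_def, Complex.normSq_apply, Real.norm_eq_abs, sq_abs]
  simp only [bromwichLine, add_re, add_im, mul_re, mul_im, ofReal_re, ofReal_im, I_re, I_im,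
    one_re, one_im, re_ofNat, im_ofNat]
  ring_nf

theorem integrable_norm_bromwichLine_rpow_neg {p : ℝ} (hp : 1 < p) :
    Integrable fun x ↦ ‖bromwichLine x‖ ^ (-p) := by
  have hjapanese : Integrable fun y : ℝ ↦ (1 + ‖y‖ ^ 2) ^ (-p / 2) :=
    integrable_rpow_neg_one_add_norm_sq (by simpa using hp)
  convert hjapanese.comp_mul_right' two_pi_pos.ne' using 2 with x
  rw [norm_bromwichLine, Real.sqrt_eq_rpow, ← Real.rpow_mul (by positivity)]
  ring_nf

theorem continuous_bromwichLine_cpow (a : ℂ) : Continuous fun x ↦ bromwichLine x ^ a :=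
  continuous_bromwichLine.cpow continuous_const bromwichLine_mem_slitPlane

theorem integrable_bromwichLine_cpow_neg {a : ℂ} (ha : 1 < a.re) :
    Integrable fun x ↦ bromwichLine x ^ (-a) := by
  refine ((integrable_norm_bromwichLine_rpow_neg ha).mul_const (rexp (π * |a.im|))).mono'
    (continuous_bromwichLine_cpow _).aestronglyMeasurable (ae_of_all _ fun x ↦ ?_)
  have harg : (bromwichLine x).arg * a.im ≤ π * |a.im| := by
    calc (bromwichLine x).arg * a.im ≤ |(bromwichLine x).arg| * |a.im| := by
          rw [← abs_mul]; exact le_abs_self _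
      _ ≤ π * |a.im| := by gcongr; exact abs_arg_le_pi _
  calc ‖bromwichLine x ^ (-a)‖
      ≤ ‖bromwichLine x‖ ^ (-a).re / rexp ((bromwichLine x).arg * (-a).im) := norm_cpow_le _ _
    _ = ‖bromwichLine x‖ ^ (-a.re) * rexp ((bromwichLine x).arg * a.im) := by
        rw [neg_re, neg_im, mul_neg, Real.exp_neg, div_inv_eq_mul]
    _ ≤ ‖bromwichLine x‖ ^ (-a.re) * rexp (π * |a.im|) := by gcongr

theorem fourier_indicator_cpow_mul_cexp_neg {a : ℂ} (ha : 0 < a.re) :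
    𝓕 ((Ioi 0).indicator fun t : ℝ ↦ (t : ℂ) ^ (a - 1) * cexp (-t)) =
      fun x ↦ bromwichLine x ^ (-a) * Complex.Gamma a := by
  ext x
  rw [← integral_cpow_mul_cexp_neg_mul_Ioi ha (by simp : 0 < (bromwichLine x).re),
    Real.fourier_real_eq_integral_exp_smul, ← integral_indicator measurableSet_Ioi]
  congr 1 with t
  by_cases ht : t ∈ Ioi 0
  · simp only [indicator_of_mem ht, smul_eq_mul]
    rw [mul_left_comm, ← Complex.exp_add]
    congr 2
    simp only [bromwichLine]
    push_cast
    ring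
  · simp only [indicator_of_notMem ht, smul_zero]

theorem cpow_div_Gamma_eq_integral_bromwichLine {a : ℂ} (ha : 1 < a.re) {t : ℝ} (ht : 0 < t) :
    (t : ℂ) ^ (a - 1) / Complex.Gamma a =
      ∫ x, cexp (t * bromwichLine x) * bromwichLine x ^ (-a) := by
  have ha₀ : 0 < a.re := one_pos.trans ha
  set f : ℝ → ℂ := fun t ↦ (t : ℂ) ^ (a - 1) * cexp (-t)
  have hf : Integrable ((Ioi 0).indicator f) := by
    rw [integrable_indicator_iff measurableSet_Ioi]
    simpa using integrableOn_cpow_mul_cexp_neg_mul_Ioi ha₀ (r := 1) (by simp)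
  have hFf : Integrable (𝓕 ((Ioi 0).indicator f)) := by
    rw [fourier_indicator_cpow_mul_cexp_neg ha₀]
    exact (integrable_bromwichLine_cpow_neg ha).mul_const _
  have hcont : ContinuousAt ((Ioi 0).indicator f) t := by
    have : ContinuousAt f t :=
      (continuousAt_ofReal_cpow_const _ _ (Or.inr ht.ne')).mul (by fun_prop)
    exact this.congr ((eqOn_indicator.eventuallyEq_of_mem (Ioi_mem_nhds ht)).symm)
  have hinv := hf.fourierInv_fourier_eq hFf hcont
  rw [Real.fourierInv_eq', fourier_indicator_cpow_mul_cexp_neg ha₀,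
    indicator_of_mem (mem_Ioi.2 ht)] at hinv
  rw [div_eq_iff (Gamma_ne_zero_of_re_pos ha₀), ← integral_mul_const]
  calc (t : ℂ) ^ (a - 1) = cexp t * f t := by
        rw [mul_left_comm, ← Complex.exp_add, add_neg_cancel, Complex.exp_zero, mul_one]
    _ = _ := by
        rw [← hinv, ← integral_const_mul]
        congr 1 with x
        rw [smul_eq_mul, ← mul_assoc, ← mul_assoc, ← Complex.exp_add]
        congr 3
        simp only [bromwichLine, RCLike.inner_apply, conj_trivial]
        push_cast
        ring

end Bromwich

section Series

theorem rpow_mul_exp_neg_le_Gamma {a c : ℝ} (ha : 1 ≤ a) (hc : 0 ≤ c) :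
    c ^ (a - 1) * rexp (-c) ≤ Real.Gamma a := by
  have hint : IntegrableOn (fun t ↦ rexp (-t) * t ^ (a - 1)) (Ioi 0) :=
    Real.GammaIntegral_convergent (by linarith)
  calc c ^ (a - 1) * rexp (-c) = ∫ t in Ioi c, rexp (-t) * c ^ (a - 1) := by
        rw [integral_mul_const, integral_exp_neg_Ioi, mul_comm]
    _ ≤ ∫ t in Ioi c, rexp (-t) * t ^ (a - 1) := by
        refine setIntegral_mono_on ((integrableOn_exp_neg_Ioi c).mul_const _)
          (hint.mono_set (Ioi_subset_Ioi hc)) measurableSet_Ioi fun t (ht : c < t) ↦ ?_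
        gcongr
    _ ≤ ∫ t in Ioi 0, rexp (-t) * t ^ (a - 1) :=
        setIntegral_mono_set hint
          ((ae_restrict_mem measurableSet_Ioi).mono fun t (ht : 0 < t) ↦ by positivity)
          (Ioi_subset_Ioi hc).eventuallyLE
    _ = Real.Gamma a := (Real.Gamma_eq_integral (by linarith)).symm

variable {α : ℝ}

-- At a pole of `Γ` the term is `zⁿ / 0 = 0`, in agreement with the entire function `1 / Γ`.
theorem summable_pow_div_Gamma (hα : 0 < α) (β : ℝ) (z : ℂ) :
    Summable fun n : ℕ ↦ z ^ n / Complex.Gamma (α * n + β) := by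
  set c : ℝ := (‖z‖ + 1) ^ α⁻¹
  have hc : 0 < c := by positivity
  have hcα : c ^ α = ‖z‖ + 1 := by
    rw [← Real.rpow_mul (by positivity), inv_mul_cancel₀ hα.ne', Real.rpow_one]
  have hratio : ‖z‖ / (‖z‖ + 1) < 1 := (div_lt_one (by positivity)).2 (lt_add_one _)
  refine Summable.of_norm_bounded_eventually_nat
    (((summable_geometric_of_lt_one (by positivity) hratio)).mul_left (rexp c / c ^ (β - 1))) ?_
  have hlarge : ∀ᶠ n : ℕ in atTop, 1 ≤ α * n + β :=
    (tendsto_atTop_add_const_right _ β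
      (tendsto_natCast_atTop_atTop.const_mul_atTop hα)).eventually_ge_atTop 1
  filter_upwards [hlarge] with n hn
  have hpow : c ^ (α * n + β - 1) = (‖z‖ + 1) ^ n * c ^ (β - 1) := by
    rw [add_sub_assoc, Real.rpow_add hc, Real.rpow_mul hc.le, hcα, Real.rpow_natCast]
  have hΓ : ‖Complex.Gamma (α * n + β)‖ = Real.Gamma (α * n + β) := by
    rw [← ofReal_natCast, ← ofReal_mul, ← ofReal_add, Complex.Gamma_ofReal, norm_real,
      Real.norm_of_nonneg (Real.Gamma_pos_of_pos (by linarith)).le]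
  calc ‖z ^ n / Complex.Gamma (α * n + β)‖ = ‖z‖ ^ n / Real.Gamma (α * n + β) := by
        rw [norm_div, norm_pow, hΓ]
    _ ≤ ‖z‖ ^ n / (c ^ (α * n + β - 1) * rexp (-c)) := by
        gcongr
        exact rpow_mul_exp_neg_le_Gamma hn hc.le
    _ = rexp c / c ^ (β - 1) * (‖z‖ / (‖z‖ + 1)) ^ n := by
        rw [hpow, Real.exp_neg, div_pow]
        field_simp

theorem norm_pow_div_Gamma_le (α β : ℝ) {z : ℂ} {R : ℝ} (hz : ‖z‖ ≤ R) (n : ℕ) :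
    ‖z ^ n / Complex.Gamma (α * n + β)‖ ≤ ‖(R : ℂ) ^ n / Complex.Gamma (α * n + β)‖ := by
  have hR : 0 ≤ R := (norm_nonneg z).trans hz
  rw [norm_div, norm_div, norm_pow, norm_pow, norm_real, Real.norm_of_nonneg hR]
  gcongr

theorem differentiable_mittagLeffler (hα : 0 < α) (β : ℝ) :
    Differentiable ℂ (mittagLeffler α β) := fun z ↦
  (differentiableOn_tsum_of_summable_norm (summable_pow_div_Gamma hα β ((‖z‖ + 1 : ℝ) : ℂ)).norm
    (fun n ↦ by fun_prop) Metric.isOpen_ball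
    fun n v hv ↦ norm_pow_div_Gamma_le α β (mem_ball_zero_iff.1 hv).le n).differentiableAt
    (Metric.isOpen_ball.mem_nhds (by simp))

theorem hasSum_deriv_mittagLeffler (hα : 0 < α) (β : ℝ) (z : ℂ) :
    HasSum (fun n : ℕ ↦ n * z ^ (n - 1) / Complex.Gamma (α * n + β))
      (deriv (mittagLeffler α β) z) := by
  have h := hasSum_deriv_of_summable_norm
    (summable_pow_div_Gamma hα β ((‖z‖ + 1 : ℝ) : ℂ)).norm
    (F := fun (n : ℕ) v ↦ v ^ n / Complex.Gamma (α * n + β)) (fun n ↦ by fun_prop)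
    Metric.isOpen_ball
    (fun n v hv ↦ norm_pow_div_Gamma_le α β (mem_ball_zero_iff.1 hv).le n) (z := z) (by simp)
  simpa using! h

theorem mittagLeffler_eq_mul_add_mul_deriv (hα : 0 < α) (β : ℝ) (z : ℂ) :
    mittagLeffler α β z =
      β * mittagLeffler α (β + 1) z + α * (z * deriv (mittagLeffler α (β + 1)) z) := by
  have h := ((summable_pow_div_Gamma hα (β + 1) z).hasSum.mul_left (β : ℂ)).add
    (((hasSum_deriv_mittagLeffler hα (β + 1) z).mul_left z).mul_left (α : ℂ))
  refine (h.congr_fun fun n ↦ ?_).tsum_eq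
  have hpow : z * (n * z ^ (n - 1)) = n * z ^ n := by
    rcases n with _ | n
    · simp
    · rw [Nat.add_sub_cancel, pow_succ]; ring
  have hΓ := one_div_Gamma_eq_self_mul_one_div_Gamma_add_one (α * n + β)
  simp only [ofReal_add, ofReal_one, ← add_assoc, div_eq_mul_inv] at hΓ ⊢
  rw [hΓ, ← mul_assoc z, hpow]
  ring

theorem mittagLeffler_comp_exp_eq (hα : 0 < α) (β : ℝ) (w : ℂ) :
    (mittagLeffler α β ∘ cexp) w = β * (mittagLeffler α (β + 1) ∘ cexp) w +
      α * deriv (mittagLeffler α (β + 1) ∘ cexp) w := by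
  rw [deriv_comp w (differentiable_mittagLeffler hα _).differentiableAt
    Complex.differentiableAt_exp, Complex.deriv_exp, mul_comm (deriv _ _)]
  exact mittagLeffler_eq_mul_add_mul_deriv hα β (cexp w)

end Series

section LogSector

/-- The image of the sector `{z | μ < |arg z|}` under the branch of the logarithm with imaginary
part in `(0, 2π)`: a strip symmetric about `Im w = π`. In this coordinate the estimates to be
proved are stable under translation by a bounded amount, as Cauchy's estimate requires. -/
def logSector (μ : ℝ) : Set ℂ := {w | μ < w.im ∧ w.im < 2 * π - μ}

theorem isOpen_logSector (μ : ℝ) : IsOpen (logSector μ) :=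
  (isOpen_lt continuous_const continuous_im).inter (isOpen_lt continuous_im continuous_const)

theorem convex_logSector (μ : ℝ) : Convex ℝ (logSector μ) :=
  (convex_halfSpace_im_gt μ).inter (convex_halfSpace_im_lt _)

theorem exists_mem_logSector_exp_eq {μ ν : ℝ} {z : ℂ} (hμ : 0 ≤ μ) (hμν : μ < ν)
    (hz : ν ≤ |z.arg|) : ∃ w ∈ logSector μ, cexp w = z := by
  have hz₀ : z ≠ 0 := by
    rintro rfl
    simp only [arg_zero, abs_zero] at hz
    linarith
  rcases le_total 0 z.arg with harg | harg
  · rw [abs_of_nonneg harg] at hz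
    refine ⟨Complex.log z, ⟨?_, ?_⟩, Complex.exp_log hz₀⟩ <;> rw [log_im]
    · linarith
    · linarith [arg_le_pi z]
  · rw [abs_of_nonpos harg] at hz
    have him : (Complex.log z + 2 * π * I).im = z.arg + 2 * π := by simp [log_im]
    refine ⟨Complex.log z + 2 * π * I, ⟨?_, ?_⟩, by rw [exp_periodic, Complex.exp_log hz₀]⟩ <;>
      rw [him]
    · linarith [neg_pi_lt_arg z]
    · linarith

theorem closedBall_subset_logSector {μ ν : ℝ} {w : ℂ} (hw : w ∈ logSector μ) :
    Metric.closedBall w (μ - ν) ⊆ logSector ν := by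
  intro v hv
  have him := abs_le.1 ((abs_im_le_norm (v - w)).trans (mem_closedBall_iff_norm.1 hv))
  rw [sub_im] at him
  exact ⟨by linarith [hw.1, him.1], by linarith [hw.2, him.2]⟩

theorem isBigO_deriv_logSector {f : ℂ → ℂ} {μ ν : ℝ} (hνμ : ν < μ)
    (hf : DifferentiableOn ℂ f (logSector ν))
    (hfO : f =O[𝓟 (logSector ν)] fun w ↦ (1 + rexp w.re)⁻¹) :
    deriv f =O[𝓟 (logSector μ)] fun w ↦ (1 + rexp w.re)⁻¹ := by
  obtain ⟨C, hC, hfC⟩ := hfO.exists_pos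
  rw [isBigOWith_principal] at hfC
  set r := μ - ν
  have hr : 0 < r := sub_pos.2 hνμ
  refine isBigO_principal.2 ⟨C * rexp r / r, fun w hw ↦ ?_⟩
  have hball := closedBall_subset_logSector (ν := ν) hw
  have hweight : ∀ v ∈ Metric.sphere w r,
      ‖(1 + rexp v.re)⁻¹‖ ≤ rexp r * ‖(1 + rexp w.re)⁻¹‖ := by
    intro v hv
    have hre := abs_le.1 ((abs_re_le_norm (v - w)).trans (mem_sphere_iff_norm.1 hv).le)
    rw [sub_re] at hre
    have hexp : rexp w.re ≤ rexp r * rexp v.re := by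
      rw [← Real.exp_add]
      gcongr
      linarith
    rw [Real.norm_of_nonneg (by positivity), Real.norm_of_nonneg (by positivity),
      ← div_eq_mul_inv, inv_le_comm₀ (by positivity) (by positivity), inv_div,
      div_le_iff₀ (by positivity)]
    linarith [Real.one_le_exp hr.le]
  calc ‖deriv f w‖ ≤ C * (rexp r * ‖(1 + rexp w.re)⁻¹‖) / r := by
        refine norm_deriv_le_of_forall_mem_sphere_norm_le hr (hf.diffContOnCl_ball hball)
          fun v hv ↦ (hfC v (hball (Metric.sphere_subset_closedBall hv))).trans ?_
        gcongr
        exact hweight v hv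
    _ = C * rexp r / r * ‖(1 + rexp w.re)⁻¹‖ := by ring

end LogSector

section Kernel

/-- The Bromwich kernel `eˢ s^(-β) / (1 - e^w s^(-α)) = eˢ s^(α - β) / (s^α - e^w)` of
`E_{α,β}(e^w)`. Summing the geometric series in `e^w s^(-α)` under the Bromwich integral of
`1 / Γ(αn + β)` produces it. -/
noncomputable def mittagLefflerKernel (α β : ℝ) (w s : ℂ) : ℂ :=
  cexp s * s ^ (-β : ℂ) / (1 - cexp w * s ^ (-α : ℂ))

variable {α β μ : ℝ} {w s : ℂ}

theorem hasSum_mittagLefflerKernel (hs : s ≠ 0) (hws : ‖cexp w * s ^ (-α : ℂ)‖ < 1) :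
    HasSum (fun n : ℕ ↦ cexp w ^ n * (cexp s * s ^ (-(α * n + β) : ℂ)))
      (mittagLefflerKernel α β w s) := by
  refine ((hasSum_geometric_of_norm_lt_one hws).mul_left (cexp s * s ^ (-β : ℂ))).congr_fun
    fun n ↦ ?_
  rw [neg_add, cpow_add _ _ hs, ← neg_mul, mul_comm (-α : ℂ), cpow_nat_mul, mul_pow]
  ring

-- The difference of the squares of the two sides is `cos² (v.im / 2) * (1 - ‖exp v‖)²`.
theorem abs_sin_half_im_mul_le_norm_one_sub_exp (v : ℂ) :
    |Real.sin (v.im / 2)| * (1 + ‖cexp v‖) ≤ ‖1 - cexp v‖ := by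
  have hcos : Real.cos v.im = 1 - 2 * Real.sin (v.im / 2) ^ 2 := by
    rw [← mul_div_cancel₀ v.im two_ne_zero, Real.cos_two_mul, Real.cos_sq']
    ring_nf
  have hsq : ‖1 - cexp v‖ ^ 2 = 1 - 2 * ‖cexp v‖ * Real.cos v.im + ‖cexp v‖ ^ 2 := by
    rw [Complex.sq_norm, normSq_apply, sub_re, sub_im, exp_re, exp_im, Complex.norm_exp, one_re,
      one_im]
    linear_combination rexp v.re ^ 2 * Real.sin_sq_add_cos_sq v.im
  refine le_of_sq_le_sq ?_ (norm_nonneg _)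
  rw [mul_pow, sq_abs, hsq, hcos]
  nlinarith [mul_nonneg (sub_nonneg.2 (Real.sin_sq_le_one (v.im / 2)))
    (sq_nonneg (1 - ‖cexp v‖))]

theorem sin_half_le_sin_half {δ θ : ℝ} (hδ : 0 ≤ δ) (hδθ : δ ≤ θ) (hθ : θ ≤ 2 * π - δ) :
    Real.sin (δ / 2) ≤ Real.sin (θ / 2) := by
  rw [← Real.cos_pi_div_two_sub, ← Real.cos_pi_div_two_sub, ← Real.cos_abs (π / 2 - θ / 2)]
  refine Real.cos_le_cos_of_nonneg_of_le_pi (abs_nonneg _) (by linarith [Real.pi_pos]) ?_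
  rw [abs_le]
  constructor <;> linarith

theorem exp_mul_cpow_neg (a : ℂ) (hs : s ≠ 0) :
    cexp w * s ^ (-a) = cexp (w - a * Complex.log s) := by
  rw [cpow_def_of_ne_zero hs, ← Complex.exp_add]
  ring_nf

theorem sin_half_mul_one_add_norm_le (hα : 0 ≤ α) (hμ : π * α / 2 ≤ μ) (hw : w ∈ logSector μ)
    (hs : 0 < s.re) :
    Real.sin ((μ - π * α / 2) / 2) * (1 + ‖cexp w * s ^ (-α : ℂ)‖) ≤
      ‖1 - cexp w * s ^ (-α : ℂ)‖ := by
  have hs₀ : s ≠ 0 := fun h ↦ by simp [h] at hs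
  obtain ⟨hμw, hwμ⟩ := hw
  obtain ⟨hargl, hargu⟩ := abs_le.1 (abs_arg_le_pi_div_two_iff.2 hs.le)
  have hlower : α * -(π / 2) ≤ α * s.arg := by gcongr
  have hupper : α * s.arg ≤ α * (π / 2) := by gcongr
  set v := w - α * Complex.log s with hv
  have hvim : v.im = w.im - α * s.arg := by simp [hv, log_im]
  have hsin : Real.sin ((μ - π * α / 2) / 2) ≤ |Real.sin (v.im / 2)| :=
    (sin_half_le_sin_half (by linarith) (by linarith) (by linarith)).trans (le_abs_self _)
  rw [exp_mul_cpow_neg _ hs₀]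
  exact (mul_le_mul_of_nonneg_right hsin (by positivity)).trans
    (abs_sin_half_im_mul_le_norm_one_sub_exp v)

theorem sin_half_pos_of_mem_logSector (hα : 0 ≤ α) (hμ : π * α / 2 < μ) (hw : w ∈ logSector μ) :
    0 < Real.sin ((μ - π * α / 2) / 2) := by
  have : 0 ≤ π * α / 2 := by positivity
  exact Real.sin_pos_of_pos_of_lt_pi (by linarith) (by linarith [hw.1, hw.2, Real.pi_pos])

theorem one_sub_exp_mul_cpow_neg_ne_zero (hα : 0 ≤ α) (hμ : π * α / 2 < μ)
    (hw : w ∈ logSector μ) (hs : 0 < s.re) : 1 - cexp w * s ^ (-α : ℂ) ≠ 0 :=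
  norm_pos_iff.1 <| (mul_pos (sin_half_pos_of_mem_logSector hα hμ hw) (by positivity)).trans_le
    (sin_half_mul_one_add_norm_le hα hμ.le hw hs)

theorem norm_mittagLefflerKernel_le (hα : 0 ≤ α) (hμ : π * α / 2 < μ) (hw : w ∈ logSector μ)
    (hs : 0 < s.re) (hs₁ : 1 ≤ ‖s‖) :
    ‖mittagLefflerKernel α β w s‖ ≤
      rexp s.re * ‖s‖ ^ (-(β - α)) / Real.sin ((μ - π * α / 2) / 2) * (1 + rexp w.re)⁻¹ := by
  have hs₀ : 0 < ‖s‖ := one_pos.trans_le hs₁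
  have hsin := sin_half_pos_of_mem_logSector hα hμ hw
  set σ := Real.sin ((μ - π * α / 2) / 2)
  have hnorm : ∀ p : ℝ, ‖s ^ (-p : ℂ)‖ = ‖s‖ ^ (-p) := fun p ↦ by
    rw [← ofReal_neg, norm_cpow_real]
  have hweight : 1 + rexp w.re ≤ ‖s‖ ^ α * (1 + ‖cexp w * s ^ (-α : ℂ)‖) := by
    have hcancel : ‖s‖ ^ α * ‖cexp w * s ^ (-α : ℂ)‖ = rexp w.re := by
      rw [norm_mul, hnorm, Complex.norm_exp, mul_left_comm, ← Real.rpow_add hs₀, add_neg_cancel,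
        Real.rpow_zero, mul_one]
    rw [mul_one_add, hcancel]
    gcongr
    exact Real.one_le_rpow hs₁ hα
  have hdenom : σ * (1 + rexp w.re) ≤ ‖s‖ ^ α * ‖1 - cexp w * s ^ (-α : ℂ)‖ :=
    calc σ * (1 + rexp w.re) ≤ σ * (‖s‖ ^ α * (1 + ‖cexp w * s ^ (-α : ℂ)‖)) := by gcongr
      _ = ‖s‖ ^ α * (σ * (1 + ‖cexp w * s ^ (-α : ℂ)‖)) := by ring
      _ ≤ _ := by gcongr; exact sin_half_mul_one_add_norm_le hα hμ.le hw hs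
  have hsplit : ‖s‖ ^ (-(β - α)) = ‖s‖ ^ α * ‖s‖ ^ (-β) := by
    rw [← Real.rpow_add hs₀, neg_sub, sub_eq_add_neg]
  calc ‖mittagLefflerKernel α β w s‖
      = rexp s.re * ‖s‖ ^ (-(β - α)) / (‖s‖ ^ α * ‖1 - cexp w * s ^ (-α : ℂ)‖) := by
        rw [mittagLefflerKernel, norm_div, norm_mul, hnorm, Complex.norm_exp, hsplit,
          mul_left_comm, mul_div_mul_left _ _ (Real.rpow_pos_of_pos hs₀ α).ne']
    _ ≤ rexp s.re * ‖s‖ ^ (-(β - α)) / (σ * (1 + rexp w.re)) := by gcongr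
    _ = _ := by rw [← div_div, div_eq_mul_inv _ (1 + _)]

theorem differentiableOn_mittagLefflerKernel (hα : 0 ≤ α) (hμ : π * α / 2 < μ) (hs : 0 < s.re) :
    DifferentiableOn ℂ (mittagLefflerKernel α β · s) (logSector μ) := by
  have hne : ∀ w ∈ logSector μ, 1 - cexp w * s ^ (-α : ℂ) ≠ 0 := fun w hw ↦
    one_sub_exp_mul_cpow_neg_ne_zero hα hμ hw hs
  unfold mittagLefflerKernel
  fun_prop (disch := assumption)

end Kernel

section IntegralRepresentation

variable {α β μ : ℝ} {w : ℂ}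

theorem measurable_mittagLefflerKernel_bromwichLine (α β : ℝ) (w : ℂ) :
    Measurable fun x ↦ mittagLefflerKernel α β w (bromwichLine x) := by
  have := continuous_bromwichLine.measurable
  unfold mittagLefflerKernel
  fun_prop

theorem norm_mittagLefflerKernel_bromwichLine_le (hα : 0 ≤ α) (hμ : π * α / 2 < μ)
    (hw : w ∈ logSector μ) (x : ℝ) :
    ‖mittagLefflerKernel α β w (bromwichLine x)‖ ≤
      rexp 1 / Real.sin ((μ - π * α / 2) / 2) * (1 + rexp w.re)⁻¹ *
        ‖bromwichLine x‖ ^ (-(β - α)) := by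
  convert norm_mittagLefflerKernel_le hα hμ hw (by simp) (one_le_norm_bromwichLine x) using 1
  rw [bromwichLine_re]
  ring

theorem norm_exp_pow_mul_bromwichLine_cpow_neg_le (hα : 0 ≤ α) (β : ℝ) (w : ℂ) (n : ℕ) (x : ℝ) :
    ‖cexp w ^ n * (cexp (bromwichLine x) * bromwichLine x ^ (-(α * n + β) : ℂ))‖ ≤
      rexp w.re ^ n * (rexp 1 * ‖bromwichLine x‖ ^ (-β)) := by
  rw [norm_mul, norm_pow, Complex.norm_exp, norm_mul, Complex.norm_exp, bromwichLine_re,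
    ← ofReal_natCast, ← ofReal_mul, ← ofReal_add, ← ofReal_neg, norm_cpow_real]
  gcongr
  · exact one_le_norm_bromwichLine x
  · exact le_add_of_nonneg_left (by positivity)

theorem hasSum_mittagLefflerKernel_bromwichLine (hα : 0 ≤ α) (β : ℝ) (hw : w.re < 0) (x : ℝ) :
    HasSum (fun n : ℕ ↦
        cexp w ^ n * (cexp (bromwichLine x) * bromwichLine x ^ (-(α * n + β) : ℂ)))
      (mittagLefflerKernel α β w (bromwichLine x)) := by
  refine hasSum_mittagLefflerKernel (bromwichLine_ne_zero x) ?_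
  rw [norm_mul, Complex.norm_exp, ← ofReal_neg, norm_cpow_real]
  exact mul_lt_one_of_nonneg_of_lt_one_left (Real.exp_nonneg _) (Real.exp_lt_one_iff.2 hw)
    (Real.rpow_le_one_of_one_le_of_nonpos (one_le_norm_bromwichLine x) (neg_nonpos.2 hα))

theorem mittagLeffler_exp_eq_integral_of_re_neg (hα : 0 ≤ α) (hβ : 1 < β) (hw : w.re < 0) :
    mittagLeffler α β (cexp w) = ∫ x, mittagLefflerKernel α β w (bromwichLine x) := by
  set F : ℕ → ℝ → ℂ := fun n x ↦
    cexp w ^ n * (cexp (bromwichLine x) * bromwichLine x ^ (-(α * n + β) : ℂ))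
  have hF_norm : ∀ n x, ‖F n x‖ ≤ rexp w.re ^ n * (rexp 1 * ‖bromwichLine x‖ ^ (-β)) :=
    norm_exp_pow_mul_bromwichLine_cpow_neg_le hα β w
  have hbound : ∀ n : ℕ,
      Integrable fun x ↦ rexp w.re ^ n * (rexp 1 * ‖bromwichLine x‖ ^ (-β)) := fun n ↦
    ((integrable_norm_bromwichLine_rpow_neg hβ).const_mul _).const_mul _
  have hF : ∀ n, Integrable (F n) := fun n ↦ by
    refine (hbound n).mono' (Continuous.aestronglyMeasurable ?_) (ae_of_all _ (hF_norm n))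
    have := continuous_bromwichLine
    have := continuous_bromwichLine_cpow (-(α * n + β))
    fun_prop
  have hsum : Summable fun n ↦ ∫ x, ‖F n x‖ :=
    Summable.of_nonneg_of_le (fun n ↦ integral_nonneg fun x ↦ norm_nonneg _)
      (fun n ↦ (integral_mono (hF n).norm (hbound n) (hF_norm n)).trans_eq
        (integral_const_mul _ _))
      ((summable_geometric_of_lt_one (Real.exp_nonneg _) (Real.exp_lt_one_iff.2 hw)).mul_right _)
  have hF_integral : ∀ n, ∫ x, F n x = cexp w ^ n / Complex.Gamma (α * n + β) := fun n ↦ by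
    have hβn : 1 < (α * n + β : ℂ).re := by
      have : 0 ≤ α * n := by positivity
      simpa using by linarith
    have h := cpow_div_Gamma_eq_integral_bromwichLine hβn one_pos
    simp only [ofReal_one, one_cpow, one_mul] at h
    rw [integral_const_mul, ← h, mul_one_div]
  have h := hasSum_integral_of_summable_integral_norm hF hsum
  simp only [hF_integral, (hasSum_mittagLefflerKernel_bromwichLine hα β hw _).tsum_eq, F] at h
  exact h.tsum_eq

theorem differentiableOn_integral_mittagLefflerKernel (hα : 0 ≤ α) (hβ : α + 1 < β)
    (hμ : π * α / 2 < μ) :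
    DifferentiableOn ℂ (fun w ↦ ∫ x, mittagLefflerKernel α β w (bromwichLine x))
      (logSector μ) := by
  refine differentiableOn_integral_of_dominated (isOpen_logSector μ)
    (bound := fun x ↦ rexp 1 / Real.sin ((μ - π * α / 2) / 2) * ‖bromwichLine x‖ ^ (-(β - α)))
    (fun w _ ↦ (measurable_mittagLefflerKernel_bromwichLine α β w).aestronglyMeasurable)
    (ae_of_all _ fun x ↦ differentiableOn_mittagLefflerKernel hα hμ (by simp))
    (ae_of_all _ fun x w hw ↦ (norm_mittagLefflerKernel_bromwichLine_le hα hμ hw x).trans ?_)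
    ((integrable_norm_bromwichLine_rpow_neg (by linarith)).const_mul _)
  have hsin := sin_half_pos_of_mem_logSector hα hμ hw
  have hweight : (1 + rexp w.re)⁻¹ ≤ 1 := inv_le_one_of_one_le₀ (by linarith [Real.exp_pos w.re])
  gcongr
  exact mul_le_of_le_one_right (by positivity) hweight

theorem mittagLeffler_exp_eq_integral (hα : 0 < α) (hβ : α + 1 < β) (hμ : π * α / 2 < μ)
    (hw : w ∈ logSector μ) :
    mittagLeffler α β (cexp w) = ∫ x, mittagLefflerKernel α β w (bromwichLine x) := by
  have hμπ : μ < π := by linarith [hw.1, hw.2]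
  have hbase : -1 + π * I ∈ logSector μ := by
    constructor
    · simpa using hμπ
    · simpa using by linarith
  have hE : AnalyticOnNhd ℂ (mittagLeffler α β ∘ cexp) (logSector μ) :=
    ((differentiable_mittagLeffler hα β).comp
      Complex.differentiable_exp).differentiableOn.analyticOnNhd (isOpen_logSector μ)
  have hK := (differentiableOn_integral_mittagLefflerKernel hα.le hβ hμ).analyticOnNhd
    (isOpen_logSector μ)
  refine hE.eqOn_of_preconnected_of_eventuallyEq hK (convex_logSector μ).isPreconnected hbase ?_ hw
  have hre : ∀ᶠ v : ℂ in 𝓝 (-1 + π * I), v.re < 0 :=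
    continuous_re.continuousAt.eventually_lt_const (by simp)
  filter_upwards [hre] with v hv
  exact mittagLeffler_exp_eq_integral_of_re_neg hα.le (by linarith) hv

end IntegralRepresentation

section Decay

variable {α β μ : ℝ}

theorem isBigO_mittagLeffler_comp_exp_of_add_one_lt (hα : 0 < α) (hβ : α + 1 < β)
    (hμ : π * α / 2 < μ) :
    (mittagLeffler α β ∘ cexp) =O[𝓟 (logSector μ)] fun w ↦ (1 + rexp w.re)⁻¹ := by
  refine isBigO_principal.2 ⟨rexp 1 / Real.sin ((μ - π * α / 2) / 2) *
    ∫ x, ‖bromwichLine x‖ ^ (-(β - α)), fun w hw ↦ ?_⟩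
  rw [Function.comp_apply, mittagLeffler_exp_eq_integral hα hβ hμ hw]
  refine (norm_integral_le_of_norm_le
    ((integrable_norm_bromwichLine_rpow_neg (by linarith)).const_mul _)
    (ae_of_all _ (norm_mittagLefflerKernel_bromwichLine_le hα.le hμ hw))).trans_eq ?_
  rw [integral_const_mul, Real.norm_of_nonneg (by positivity)]
  ring

theorem isBigO_mittagLeffler_comp_exp (hα : 0 < α) (β : ℝ) (hμ : π * α / 2 < μ) :
    (mittagLeffler α β ∘ cexp) =O[𝓟 (logSector μ)] fun w ↦ (1 + rexp w.re)⁻¹ := by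
  obtain ⟨k, hk⟩ := exists_nat_gt (α + 1 - β)
  induction k generalizing β μ with
  | zero =>
    rw [Nat.cast_zero] at hk
    exact isBigO_mittagLeffler_comp_exp_of_add_one_lt hα (by linarith) hμ
  | succ k ih =>
    have hk' : α + 1 - (β + 1) < k := by
      push_cast at hk
      linarith
    obtain ⟨ν, hν, hνμ⟩ := exists_between hμ
    have hdiff : Differentiable ℂ (mittagLeffler α (β + 1) ∘ cexp) :=
      (differentiable_mittagLeffler hα _).comp Complex.differentiable_exp
    exact (((ih (β + 1) hμ hk').const_mul_left β).add
      ((isBigO_deriv_logSector hνμ hdiff.differentiableOn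
        (ih (β + 1) hν hk')).const_mul_left α)).congr_left
      fun w ↦ (mittagLeffler_comp_exp_eq hα β w).symm

end Decay

theorem mittagLeffler_sector_bound_general (α β μ : ℝ) (hα : 0 < α) (hμ : π * α / 2 < μ) :
    ∃ C > 0, ∀ z : ℂ, μ ≤ |z.arg| → ‖mittagLeffler α β z‖ ≤ C / (1 + ‖z‖) := by
  obtain ⟨ν, hν, hνμ⟩ := exists_between hμ
  have hν₀ : 0 ≤ ν := le_trans (by positivity) hν.le
  obtain ⟨C, hC, hbound⟩ := (isBigO_mittagLeffler_comp_exp hα β hν).exists_pos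
  refine ⟨C, hC, fun z hz ↦ ?_⟩
  obtain ⟨w, hw, rfl⟩ := exists_mem_logSector_exp_eq hν₀ hνμ hz
  calc ‖mittagLeffler α β (cexp w)‖ ≤ C * ‖(1 + rexp w.re)⁻¹‖ := isBigOWith_principal.1 hbound w hw
    _ = C / (1 + ‖cexp w‖) := by
      rw [Real.norm_of_nonneg (by positivity), Complex.norm_exp, div_eq_mul_inv]

/-- Decay estimate for the Mittag-Leffler function in the sector `μ ≤ arg z ≤ π`. -/
theorem mittagLeffler_sector_bound (α β μ : ℝ) (hα0 : 0 < α) (hα2 : α < 2)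
    (hβ : 0 < β) (hμ1 : Real.pi * α / 2 < μ) (hμ2 : μ < min Real.pi (Real.pi * α)) :
    ∃ C > 0, ∀ z : ℂ, μ ≤ z.arg → z.arg ≤ Real.pi →
      ‖mittagLeffler α β z‖ ≤ C / (1 + ‖z‖) := by
  obtain ⟨C, hC, hbound⟩ := mittagLeffler_sector_bound_general α β μ hα0 hμ1
  exact ⟨C, hC, fun z hz _ ↦ hbound z (hz.trans (le_abs_self _))⟩
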